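/- arXiv:1708.04307 — 9 statements merged into one kernel-verified Lean document; each statement's English description precedes it below -/
import Mathlib

section
/- Let x : ℝ → ℝ³ be a Kepler solution on an open interval I (i.e. x is twice differentiable on I, x(t) ≠ 0 for t ∈ I, and x''(t) = −(G·M/4)·x(t)/‖x(t)‖³ on I, with constants G, M > 0). Then the energy E₁(t) := (1/2)‖x'(t)‖² − G·M/(4‖x(t)‖) is constant on I; that is, E₁(t) = E₁(s) for all t, s ∈ I. -/
open MeasureTheory

/-- Conservation of energy for the Kepler two-body problem: along any Kepler solution
`x` on an open interval `I` (i.e. `x` twice differentiable, nonvanishing, satisfying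
`x'' = -(G M / 4) x / ‖x‖³` on `I`), the energy
`E₁(t) = (1/2)‖x'(t)‖² - G M/(4‖x(t)‖)` is constant. -/
theorem kepler_energy_conserved
    (G M : ℝ) (hG : 0 < G) (hM : 0 < M)
    (I : Set ℝ) (hIopen : IsOpen I) (hIconn : I.OrdConnected)
    (x : ℝ → EuclideanSpace ℝ (Fin 3))
    (hx1 : ∀ t ∈ I, DifferentiableAt ℝ x t)
    (hx2 : ∀ t ∈ I, DifferentiableAt ℝ (deriv x) t)
    (hx0 : ∀ t ∈ I, x t ≠ 0)
    (hode : ∀ t ∈ I, deriv (deriv x) t = (-(G * M / 4) / ‖x t‖ ^ 3) • x t)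
    (t s : ℝ) (ht : t ∈ I) (hs : s ∈ I) :
    (1 / 2) * ‖deriv x t‖ ^ 2 - G * M / (4 * ‖x t‖)
      = (1 / 2) * ‖deriv x s‖ ^ 2 - G * M / (4 * ‖x s‖) := by
  have key : ∀ u ∈ I, HasDerivAt
      (fun u => (1 / 2) * ‖deriv x u‖ ^ 2 - G * M / (4 * ‖x u‖)) 0 u := by
    intro u hu
    have hn : 0 < ‖x u‖ := norm_pos_iff.mpr (hx0 u hu)
    have h1 := (hx1 u hu).hasDerivAt.norm_sq
    have h2 := (hx2 u hu).hasDerivAt.norm_sq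
    have h3 := h1.sqrt (by positivity)
    simp only [Real.sqrt_sq (norm_nonneg _)] at h3
    have h4 := (h2.const_mul (1 / 2)).sub
      ((hasDerivAt_const u (G * M)).div (h3.const_mul 4) (by positivity))
    refine h4.congr_deriv ?_
    rw [hode u hu, inner_smul_right, real_inner_comm]
    field_simp
    ring
  exact hIopen.is_const_of_deriv_eq_zero hIconn.isPreconnected
    (fun u hu => (key u hu).differentiableAt.differentiableWithinAt)
    (fun u hu => (key u hu).deriv) ht hs
end

section
/- Let x : ℝ → ℝ³ be a Kepler solution on an open interval I (i.e. x is twice differentiable on I, x(t) ≠ 0 for t ∈ I, and x''(t) = −(G·M/4)·x(t)/‖x(t)‖³ on I, with constants G, M > 0). Then the angular momentum J(t) := x(t) × x'(t) is constant on I; that is, J(t) = J(s) for all t, s ∈ I. -/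
/-- The cross product on `ℝ³ = EuclideanSpace ℝ (Fin 3)`. -/
noncomputable def cross3 (a b : EuclideanSpace ℝ (Fin 3)) : EuclideanSpace ℝ (Fin 3) :=
  (EuclideanSpace.equiv (Fin 3) ℝ).symm
    ![a 1 * b 2 - a 2 * b 1, a 2 * b 0 - a 0 * b 2, a 0 * b 1 - a 1 * b 0]

/-- Conservation of angular momentum for the Kepler two-body problem: along any Kepler
solution `x` on an open interval `I` (twice differentiable, nonvanishing, satisfying
`x'' = -(G M / 4) x / ‖x‖³` on `I`), the angular momentum `J(t) = x(t) × x'(t)` is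
constant. -/
theorem kepler_angular_momentum_conserved
    (G M : ℝ) (hG : 0 < G) (hM : 0 < M)
    (I : Set ℝ) (hIopen : IsOpen I) (hIconn : I.OrdConnected)
    (x : ℝ → EuclideanSpace ℝ (Fin 3))
    (hx1 : ∀ t ∈ I, DifferentiableAt ℝ x t)
    (hx2 : ∀ t ∈ I, DifferentiableAt ℝ (deriv x) t)
    (hx0 : ∀ t ∈ I, x t ≠ 0)
    (hode : ∀ t ∈ I, deriv (deriv x) t = (-(G * M / 4) / ‖x t‖ ^ 3) • x t)
    (t s : ℝ) (ht : t ∈ I) (hs : s ∈ I) :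
    cross3 (x t) (deriv x t) = cross3 (x s) (deriv x s) := by
  have hc : ∀ u ∈ I, ∀ i : Fin 3, HasDerivAt (fun r => x r i) (deriv x u i) u := fun u hu i =>
    (EuclideanSpace.proj i : EuclideanSpace ℝ (Fin 3) →L[ℝ] ℝ).hasFDerivAt.comp_hasDerivAt u (hx1 u hu).hasDerivAt
  have hc2 : ∀ u ∈ I, ∀ i : Fin 3,
      HasDerivAt (fun r => deriv x r i) (deriv (deriv x) u i) u := fun u hu i =>
    (EuclideanSpace.proj i : EuclideanSpace ℝ (Fin 3) →L[ℝ] ℝ).hasFDerivAt.comp_hasDerivAt u (hx2 u hu).hasDerivAt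
  have key : ∀ i j : Fin 3, x t i * deriv x t j - x t j * deriv x t i
      = x s i * deriv x s j - x s j * deriv x s i := by
    intro i j
    have hd : ∀ u ∈ I, HasDerivAt
        (fun r => x r i * deriv x r j - x r j * deriv x r i) 0 u := by
      intro u hu
      have h := ((hc u hu i).mul (hc2 u hu j)).sub ((hc u hu j).mul (hc2 u hu i))
      refine h.congr_deriv ?_
      rw [hode u hu]
      simp only [PiLp.smul_apply, smul_eq_mul]
      ring
    exact hIopen.is_const_of_deriv_eq_zero hIconn.isPreconnected
      (fun u hu => (hd u hu).differentiableAt.differentiableWithinAt)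
      (fun u hu => (hd u hu).deriv) ht hs
  unfold cross3
  rw [key 1 2, key 2 0, key 0 1]
end

section
/- Let x : ℝ → ℝ³ be a Kepler solution on an open interval I (twice differentiable, x(t) ≠ 0, x''(t) = −(G·M/4)·x(t)/‖x(t)‖³ on I, with G, M > 0). Then the orbit is confined to the plane orthogonal to the (conserved) angular momentum: for all t, s ∈ I, the inner product of x(t) with J(s) := x(s) × x'(s) is zero, i.e. x(t) · (x(s) × x'(s)) = 0. -/
open scoped RealInnerProductSpace

/-- A Kepler orbit is confined to the plane orthogonal to the (conserved) angular
momentum: for all `t, s ∈ I`, `x(t) · (x(s) × x'(s)) = 0`. -/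
theorem kepler_orbit_planar
    (G M : ℝ) (hG : 0 < G) (hM : 0 < M)
    (I : Set ℝ) (hIopen : IsOpen I) (hIconn : I.OrdConnected)
    (x : ℝ → EuclideanSpace ℝ (Fin 3))
    (hx1 : ∀ t ∈ I, DifferentiableAt ℝ x t)
    (hx2 : ∀ t ∈ I, DifferentiableAt ℝ (deriv x) t)
    (hx0 : ∀ t ∈ I, x t ≠ 0)
    (hode : ∀ t ∈ I, deriv (deriv x) t = (-(G * M / 4) / ‖x t‖ ^ 3) • x t)
    (t s : ℝ) (ht : t ∈ I) (hs : s ∈ I) :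
    ⟪x t, cross3 (x s) (deriv x s)⟫ = 0 := by
  have hc : ∀ i j : Fin 3, x s i * deriv x s j - x s j * deriv x s i
      = x t i * deriv x t j - x t j * deriv x t i := by
    intro i j
    have h1 : ∀ k : Fin 3, ∀ u ∈ I, HasDerivAt (fun v => x v k) (deriv x u k) u := by
      intro k u hu
      exact (EuclideanSpace.proj (𝕜 := ℝ) k).hasFDerivAt.comp_hasDerivAt u (hx1 u hu).hasDerivAt
    have h2 : ∀ k : Fin 3, ∀ u ∈ I, HasDerivAt (fun v => deriv x v k)
        ((-(G * M / 4) / ‖x u‖ ^ 3) * x u k) u := by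
      intro k u hu
      have h := (EuclideanSpace.proj (𝕜 := ℝ) k).hasFDerivAt.comp_hasDerivAt u
        (hx2 u hu).hasDerivAt
      rw [hode u hu] at h
      exact h
    have h3 : ∀ u ∈ I, HasDerivAt
        (fun v => x v i * deriv x v j - x v j * deriv x v i) 0 u := by
      intro u hu
      have h := ((h1 i u hu).mul (h2 j u hu)).sub ((h1 j u hu).mul (h2 i u hu))
      exact h.congr_deriv (by ring)
    exact hIopen.is_const_of_deriv_eq_zero hIconn.isPreconnected
      (fun u hu => (h3 u hu).differentiableAt.differentiableWithinAt)
      (fun u hu => (h3 u hu).deriv) hs ht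
  have e : cross3 (x s) (deriv x s) = cross3 (x t) (deriv x t) := by
    simp only [cross3, hc]
  rw [e]
  simp [cross3, PiLp.inner_apply, Fin.sum_univ_three]
  ring
end

section
/- Let x : ℝ → ℝ³ be a Kepler solution on an open interval I (twice differentiable, x(t) ≠ 0, x''(t) = −(G·M/4)·x(t)/‖x(t)‖³ on I, with G, M > 0). Then the eccentricity vector e(t) := (4/(G·M))·( x'(t) × (x(t) × x'(t)) − (G·M/(4‖x(t)‖))·x(t) ) is constant on I; that is, e(t) = e(s) for all t, s ∈ I. -/
lemma cross3_triple (v x : EuclideanSpace ℝ (Fin 3)) :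
    cross3 v (cross3 x v) = (inner ℝ v v : ℝ) • x - (inner ℝ x v : ℝ) • v := by
  ext i
  fin_cases i <;> simp [cross3, -real_inner_self_eq_norm_sq, -inner_self_eq_norm_sq_to_K, PiLp.inner_apply, Fin.sum_univ_three] <;> ring

lemma hasDerivAt_ecc (k : ℝ) (x v : ℝ → EuclideanSpace ℝ (Fin 3)) (t : ℝ)
    (h1 : HasDerivAt x (v t) t)
    (h2 : HasDerivAt v ((-k / ‖x t‖ ^ 3) • x t) t) (h0 : x t ≠ 0) :
    HasDerivAt (fun u => (inner ℝ (v u) (v u) : ℝ) • x u - (inner ℝ (x u) (v u) : ℝ) • v u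
      - (k / ‖x u‖) • x u) 0 t := by
  have hr : 0 < ‖x t‖ := norm_pos_iff.mpr h0
  have hn : HasDerivAt (fun u => ‖x u‖) ((inner ℝ (x t) (v t) : ℝ) / ‖x t‖) t := by
    have h := (h1.norm_sq).sqrt (by positivity)
    simp only [Real.sqrt_sq (norm_nonneg _)] at h
    convert h using 1
    field_simp
  have hk : HasDerivAt (fun u => k / ‖x u‖)
      (-(k * (inner ℝ (x t) (v t) : ℝ)) / ‖x t‖ ^ 3) t := by
    refine ((hasDerivAt_const t k).div hn hr.ne').congr_deriv ?_
    field_simp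
    ring
  have H := (((h2.inner ℝ h2).smul h1).sub ((h1.inner ℝ h2).smul h2)).sub (hk.smul h1)
  refine H.congr_deriv ?_
  simp only [inner_smul_left, inner_smul_right, real_inner_self_eq_norm_sq,
    real_inner_comm (x t) (v t), conj_trivial]
  match_scalars <;> field_simp <;> ring

/-- Conservation of the eccentricity (Laplace–Runge–Lenz) vector
`e(t) = (4/(G M)) • (x'(t) × (x(t) × x'(t)) - (G M/(4‖x(t)‖)) • x(t))`
along any Kepler solution. -/
theorem kepler_eccentricity_conserved
    (G M : ℝ) (hG : 0 < G) (hM : 0 < M)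
    (I : Set ℝ) (hIopen : IsOpen I) (hIconn : I.OrdConnected)
    (x : ℝ → EuclideanSpace ℝ (Fin 3))
    (hx1 : ∀ t ∈ I, DifferentiableAt ℝ x t)
    (hx2 : ∀ t ∈ I, DifferentiableAt ℝ (deriv x) t)
    (hx0 : ∀ t ∈ I, x t ≠ 0)
    (hode : ∀ t ∈ I, deriv (deriv x) t = (-(G * M / 4) / ‖x t‖ ^ 3) • x t)
    (t s : ℝ) (ht : t ∈ I) (hs : s ∈ I) :
    (4 / (G * M)) • (cross3 (deriv x t) (cross3 (x t) (deriv x t))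
        - (G * M / (4 * ‖x t‖)) • x t)
      = (4 / (G * M)) • (cross3 (deriv x s) (cross3 (x s) (deriv x s))
        - (G * M / (4 * ‖x s‖)) • x s) := by
  congr 1
  simp only [cross3_triple]
  have key : ∀ u ∈ I, HasDerivAt (fun u => (inner ℝ (deriv x u) (deriv x u) : ℝ) • x u
      - (inner ℝ (x u) (deriv x u) : ℝ) • deriv x u - ((G * M / 4) / ‖x u‖) • x u) 0 u := by
    intro u hu
    refine hasDerivAt_ecc (G * M / 4) x (deriv x) u (hx1 u hu).hasDerivAt ?_ (hx0 u hu)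
    rw [← hode u hu]
    exact (hx2 u hu).hasDerivAt
  have := hIopen.is_const_of_deriv_eq_zero hIconn.isPreconnected
    (fun u hu => (key u hu).differentiableAt.differentiableWithinAt)
    (fun u hu => (key u hu).deriv) ht hs
  simpa only [div_div] using this
end

section
/- Let x, v ∈ ℝ³ with x ≠ 0 and let G, M > 0. Define E := (1/2)‖v‖² − G·M/(4‖x‖), J := x × v, and e := (4/(G·M))·( v × J − (G·M/(4‖x‖))·x ). Then ‖e‖² = 1 + 32·E·‖J‖²/(G·M)². In particular E < 0 if and only if ‖e‖ < 1, and E > 0 if and only if ‖e‖ > 1 (when J ≠ 0). -/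
theorem ecc_aux (c d : ℝ) (x v : EuclideanSpace ℝ (Fin 3)) :
    ‖c • (cross3 v (cross3 x v) - d • x)‖ ^ 2
      = c ^ 2 * (‖v‖ ^ 2 * ‖cross3 x v‖ ^ 2 - 2 * d * ‖cross3 x v‖ ^ 2 + d ^ 2 * ‖x‖ ^ 2) := by
  simp only [EuclideanSpace.real_norm_sq_eq, Fin.sum_univ_three, cross3]
  simp
  ring

/-- The norm of the eccentricity vector satisfies
`‖e‖² = 1 + 32 E ‖J‖²/(G M)²`; in particular (when `J ≠ 0`) `E < 0 ↔ ‖e‖ < 1` and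
`E > 0 ↔ ‖e‖ > 1`. -/
theorem eccentricity_norm_sq
    (G M : ℝ) (hG : 0 < G) (hM : 0 < M)
    (x v : EuclideanSpace ℝ (Fin 3)) (hx : x ≠ 0)
    (Ept : ℝ) (hE : Ept = (1 / 2) * ‖v‖ ^ 2 - G * M / (4 * ‖x‖))
    (J : EuclideanSpace ℝ (Fin 3)) (hJ : J = cross3 x v)
    (e : EuclideanSpace ℝ (Fin 3))
    (he : e = (4 / (G * M)) • (cross3 v J - (G * M / (4 * ‖x‖)) • x)) :
    ‖e‖ ^ 2 = 1 + 32 * Ept * ‖J‖ ^ 2 / (G * M) ^ 2 ∧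
    (J ≠ 0 → ((Ept < 0 ↔ ‖e‖ < 1) ∧ (0 < Ept ↔ 1 < ‖e‖))) := by
  have hr : 0 < ‖x‖ := norm_pos_iff.mpr hx
  have hGM : 0 < G * M := mul_pos hG hM
  have key : ‖e‖ ^ 2 = 1 + 32 * Ept * ‖J‖ ^ 2 / (G * M) ^ 2 := by
    rw [he, hJ, ecc_aux, hE]
    field_simp
    ring
  refine ⟨key, fun hJ0 => ?_⟩
  have hj : 0 < ‖J‖ := norm_pos_iff.mpr hJ0
  have hc : 0 < 32 * ‖J‖ ^ 2 / (G * M) ^ 2 := by positivity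
  have key2 : ‖e‖ ^ 2 - 1 = Ept * (32 * ‖J‖ ^ 2 / (G * M) ^ 2) := by
    rw [key]; ring
  have hn := norm_nonneg e
  constructor
  · rw [← sq_lt_one_iff₀ hn, ← sub_neg (a := ‖e‖ ^ 2), key2]
    exact ⟨fun h => mul_neg_of_neg_of_pos h hc, fun h => by
      by_contra h0
      exact absurd h (not_lt.mpr (mul_nonneg (not_lt.mp h0) hc.le))⟩
  · rw [← one_lt_sq_iff₀ hn, ← sub_pos (a := ‖e‖ ^ 2), key2, mul_pos_iff_of_pos_right hc]
end

section
/- Let x : ℝ → ℝ³ be a Kepler solution on an open interval I (twice differentiable, x(t) ≠ 0, x''(t) = −(G·M/4)·x(t)/‖x(t)‖³ on I, with G, M > 0), fix t₀ ∈ I, and let E := (1/2)‖x'(t₀)‖² − G·M/(4‖x(t₀)‖) and J := ‖x(t₀) × x'(t₀)‖ be the conserved energy and angular momentum magnitude. Then the radial distance r(t) := ‖x(t)‖ is differentiable on I and for every t ∈ I its derivative satisfies (r'(t))² = 2E + G·M/(2 r(t)) − J²/r(t)². -/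
theorem cross3_norm_sq (a b : EuclideanSpace ℝ (Fin 3)) :
    ‖cross3 a b‖ ^ 2 = inner ℝ a a * inner ℝ b b - (inner ℝ a b) ^ 2 := by
  rw [real_inner_self_eq_norm_sq, real_inner_self_eq_norm_sq]
  simp [cross3, EuclideanSpace.norm_sq_eq, PiLp.inner_apply, Fin.sum_univ_three]
  ring

/-- Radial equation for a Kepler solution: with `E` and `J` the conserved energy and
angular momentum magnitude (evaluated at `t₀ ∈ I`), the radial distance `r(t) = ‖x(t)‖`
is differentiable on `I` and satisfies `(r')² = 2E + G M/(2r) - J²/r²`. -/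
theorem kepler_radial_velocity
    (G M : ℝ) (hG : 0 < G) (hM : 0 < M)
    (I : Set ℝ) (hIopen : IsOpen I) (hIconn : I.OrdConnected)
    (x : ℝ → EuclideanSpace ℝ (Fin 3))
    (hx1 : ∀ t ∈ I, DifferentiableAt ℝ x t)
    (hx2 : ∀ t ∈ I, DifferentiableAt ℝ (deriv x) t)
    (hx0 : ∀ t ∈ I, x t ≠ 0)
    (hode : ∀ t ∈ I, deriv (deriv x) t = (-(G * M / 4) / ‖x t‖ ^ 3) • x t)
    (t₀ : ℝ) (ht₀ : t₀ ∈ I)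
    (Ept : ℝ) (hE : Ept = (1 / 2) * ‖deriv x t₀‖ ^ 2 - G * M / (4 * ‖x t₀‖))
    (J : ℝ) (hJlen : J = ‖cross3 (x t₀) (deriv x t₀)‖)
    (t : ℝ) (ht : t ∈ I) :
    DifferentiableAt ℝ (fun τ => ‖x τ‖) t ∧
    (deriv (fun τ => ‖x τ‖) t) ^ 2
      = 2 * Ept + G * M / (2 * ‖x t‖) - J ^ 2 / ‖x t‖ ^ 2 := by
  have hv : ∀ s ∈ I, HasDerivAt x (deriv x s) s := fun s hs => (hx1 s hs).hasDerivAt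
  have ha : ∀ s ∈ I, HasDerivAt (deriv x) ((-(G * M / 4) / ‖x s‖ ^ 3) • x s) s :=
    fun s hs => hode s hs ▸ (hx2 s hs).hasDerivAt
  have hr : ∀ s ∈ I, HasDerivAt (fun τ => ‖x τ‖) (inner ℝ (x s) (deriv x s) / ‖x s‖) s := by
    intro s hs
    have hp : 0 < ‖x s‖ := norm_pos_iff.mpr (hx0 s hs)
    have h := ((hv s hs).norm_sq).sqrt (by positivity)
    simp only [Real.sqrt_sq (norm_nonneg _)] at h
    convert h using 1
    field_simp
  have const : ∀ f : ℝ → ℝ, (∀ s ∈ I, HasDerivAt f 0 s) → f t = f t₀ := fun f hf =>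
    hIopen.is_const_of_deriv_eq_zero hIconn.isPreconnected
      (fun s hs => (hf s hs).differentiableAt.differentiableWithinAt)
      (fun s hs => (hf s hs).deriv) ht ht₀
  have h1 := const (fun s => (1 / 2) * inner ℝ (deriv x s) (deriv x s) - G * M / 4 * ‖x s‖⁻¹) (by
    intro s hs
    have hp : 0 < ‖x s‖ := norm_pos_iff.mpr (hx0 s hs)
    have h := (((ha s hs).inner ℝ (ha s hs)).const_mul (1 / 2)).sub
      (((hr s hs).inv hp.ne').const_mul (G * M / 4))
    refine h.congr_deriv ?_
    simp only [inner_smul_left, inner_smul_right, real_inner_comm (x s) (deriv x s)]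
    simp
    field_simp
    ring)
  have h2 := const (fun s => inner ℝ (x s) (x s) * inner ℝ (deriv x s) (deriv x s)
      - (inner ℝ (x s) (deriv x s)) ^ 2) (by
    intro s hs
    have h := (((hv s hs).inner ℝ (hv s hs)).mul ((ha s hs).inner ℝ (ha s hs))).sub
      (((hv s hs).inner ℝ (ha s hs)).pow 2)
    refine h.congr_deriv ?_
    simp only [inner_smul_left, inner_smul_right, real_inner_comm (x s) (deriv x s)]
    simp
    ring)
  refine ⟨(hr t ht).differentiableAt, ?_⟩
  rw [(hr t ht).deriv, hJlen, cross3_norm_sq, hE]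
  beta_reduce at h1 h2
  rw [← h2]
  have h3 : (1 / 2) * ‖deriv x t₀‖ ^ 2 - G * M / (4 * ‖x t₀‖) =
      1 / 2 * inner ℝ (deriv x t) (deriv x t) - G * M / 4 * ‖x t‖⁻¹ := by
    rw [h1, real_inner_self_eq_norm_sq, div_mul_eq_div_div, div_eq_mul_inv (G * M / 4)]
  rw [h3, real_inner_self_eq_norm_sq (x t)]
  have hp : ‖x t‖ ≠ 0 := norm_ne_zero_iff.mpr (hx0 t ht)
  field_simp
  ring
end

section
/- For p > 0 set λ₊(p) := 1/( p/4 + √(p²/16 + 1) ) (the positive root of λ² + (p/2)λ − 1 = 0) and define the scattering integral I(p) := ∫_{λ₊(p)}^{∞} dλ / ( λ·√(λ² + (p/2)λ − 1) ). Then: (i) for every p > 0 the integrand is integrable on (λ₊(p), ∞), so I(p) is finite; (ii) lim_{p → 0⁺} 2·I(p) = π, equivalently the scattering angle α(p) := 2·I(p) − π tends to 0; and (iii) lim_{p → ∞} 2·I(p) = 2π, equivalently α(p) tends to π. -/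
open MeasureTheory Filter

/-- `λ₊(p)`, the positive root of `λ² + (p/2)λ - 1 = 0`. -/
noncomputable def lamPlus (p : ℝ) : ℝ := 1 / (p / 4 + Real.sqrt (p ^ 2 / 16 + 1))

/-- The scattering integral `I(p) = ∫_{λ₊(p)}^∞ dλ/(λ √(λ² + (p/2)λ - 1))`. -/
noncomputable def scatteringIntegral (p : ℝ) : ℝ :=
  ∫ l in Set.Ioi (lamPlus p), 1 / (l * Real.sqrt (l ^ 2 + (p / 2) * l - 1))

theorem scat_aux (p : ℝ) (hp : 0 < p) :
    IntegrableOn (fun l => 1 / (l * Real.sqrt (l ^ 2 + (p / 2) * l - 1)))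
        (Set.Ioi (lamPlus p)) ∧
    scatteringIntegral p = Real.arctan (p / 4) + Real.pi / 2 := by
  set D := Real.sqrt (p ^ 2 / 16 + 1) with hD
  have hD2 : D ^ 2 = p ^ 2 / 16 + 1 := Real.sq_sqrt (by positivity)
  have hDp : 0 < D := Real.sqrt_pos.2 (by positivity)
  have hcD : p / 4 < D := by nlinarith
  have hlam : lamPlus p = (p / 4 + D)⁻¹ := by rw [lamPlus, one_div]
  have hlp : 0 < lamPlus p := by rw [hlam]; positivity
  let g : ℝ → ℝ := fun l => - Real.arcsin ((l⁻¹ - p / 4) / D)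
  have hcont : ContinuousWithinAt g (Set.Ici (lamPlus p)) (lamPlus p) := by
    apply ContinuousAt.continuousWithinAt
    have h1 : ContinuousAt (fun l : ℝ => (l⁻¹ - p / 4) / D) (lamPlus p) :=
      ((continuousAt_inv₀ hlp.ne').sub continuousAt_const).div_const D
    exact (Real.continuous_arcsin.continuousAt.comp h1).neg
  have hderiv : ∀ x ∈ Set.Ioi (lamPlus p),
      HasDerivAt g (1 / (x * Real.sqrt (x ^ 2 + (p / 2) * x - 1))) x := by
    intro x hx
    have hx : lamPlus p < x := hx
    have hx0 : 0 < x := hlp.trans hx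
    have hxi : x⁻¹ < p / 4 + D := by
      rw [hlam] at hx
      exact inv_lt_of_inv_lt₀ (by positivity) hx
    have hxi0 : 0 < x⁻¹ := by positivity
    have hw1 : (x⁻¹ - p / 4) / D < 1 := by rw [div_lt_one hDp]; linarith
    have hw2 : -1 < (x⁻¹ - p / 4) / D := by rw [lt_div_iff₀ hDp]; linarith
    have hd : HasDerivAt (fun l : ℝ => (l⁻¹ - p / 4) / D) (-(x ^ 2)⁻¹ / D) x :=
      ((hasDerivAt_inv hx0.ne').sub_const _).div_const D
    have h := ((Real.hasDerivAt_arcsin hw2.ne' hw1.ne).comp x hd).neg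
    have hpos : 0 < 1 - ((x⁻¹ - p / 4) / D) ^ 2 := by nlinarith
    have hQ : x ^ 2 + (p / 2) * x - 1 = (x * D) ^ 2 * (1 - ((x⁻¹ - p / 4) / D) ^ 2) := by
      have : (x * D) ^ 2 * (1 - ((x⁻¹ - p / 4) / D) ^ 2)
          = x ^ 2 * D ^ 2 - (1 - x * (p / 4)) ^ 2 := by
        field_simp
      rw [this, hD2]; ring
    refine HasDerivAt.congr_deriv (f := g) h ?_
    rw [hQ, Real.sqrt_mul (by positivity), Real.sqrt_sq (by positivity)]
    have hs := Real.sqrt_pos.2 hpos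
    set S := Real.sqrt (1 - ((x⁻¹ - p / 4) / D) ^ 2)
    field_simp
  have hnn : ∀ x ∈ Set.Ioi (lamPlus p),
      0 ≤ 1 / (x * Real.sqrt (x ^ 2 + (p / 2) * x - 1)) := by
    intro x hx
    have hx0 : 0 < x := hlp.trans hx
    positivity
  have hlim : Tendsto g atTop (nhds (Real.arctan (p / 4))) := by
    have h1 : Tendsto (fun l : ℝ => (l⁻¹ - p / 4) / D) atTop (nhds ((0 - p / 4) / D)) :=
      (tendsto_inv_atTop_zero.sub_const _).div_const D
    have h2 := ((Real.continuous_arcsin.tendsto _).comp h1).neg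
    have e : Real.arctan (p / 4) = - Real.arcsin ((0 - p / 4) / D) := by
      rw [Real.arctan_eq_arcsin, zero_sub, neg_div, Real.arcsin_neg, neg_neg, hD]
      congr 3
      ring
    rw [e]
    exact h2
  refine ⟨integrableOn_Ioi_deriv_of_nonneg hcont hderiv hnn hlim, ?_⟩
  rw [scatteringIntegral, integral_Ioi_of_hasDerivAt_of_nonneg hcont hderiv hnn hlim]
  have : g (lamPlus p) = -(Real.pi / 2) := by
    simp only [g]
    rw [hlam, inv_inv, add_sub_cancel_left, div_self hDp.ne', Real.arcsin_one]
  rw [this]; ring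

/-- (i) The scattering integrand is integrable on `(λ₊(p), ∞)` for every `p > 0`;
(ii) as `p → 0⁺`, `2 I(p) → π` (scattering angle `α = 2I(p) - π → 0`);
(iii) as `p → ∞`, `2 I(p) → 2π` (scattering angle `α → π`). -/
theorem scattering_angle_limits :
    (∀ p : ℝ, 0 < p →
      IntegrableOn (fun l => 1 / (l * Real.sqrt (l ^ 2 + (p / 2) * l - 1)))
        (Set.Ioi (lamPlus p))) ∧
    Tendsto (fun p => 2 * scatteringIntegral p) (nhdsWithin 0 (Set.Ioi 0))
      (nhds Real.pi) ∧
    Tendsto (fun p => 2 * scatteringIntegral p) atTop (nhds (2 * Real.pi)) := by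
  refine ⟨fun p hp => (scat_aux p hp).1, ?_, ?_⟩
  · have h : Tendsto (fun p : ℝ => 2 * (Real.arctan (p / 4) + Real.pi / 2))
        (nhdsWithin 0 (Set.Ioi 0)) (nhds (2 * (Real.arctan (0 / 4) + Real.pi / 2))) := by
      apply Tendsto.mono_left _ nhdsWithin_le_nhds
      apply Continuous.tendsto (f := fun p : ℝ => 2 * (Real.arctan (p / 4) + Real.pi / 2))
      fun_prop
    have e : 2 * (Real.arctan (0 / 4) + Real.pi / 2) = Real.pi := by
      rw [zero_div, Real.arctan_zero]; ring
    rw [e] at h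
    refine h.congr' ?_
    filter_upwards [self_mem_nhdsWithin] with p hp
    rw [(scat_aux p hp).2]
  · have h : Tendsto (fun p : ℝ => 2 * (Real.arctan (p / 4) + Real.pi / 2))
        atTop (nhds (2 * (Real.pi / 2 + Real.pi / 2))) := by
      have h1 : Tendsto (fun p : ℝ => Real.arctan (p / 4)) atTop (nhds (Real.pi / 2)) :=
        (tendsto_nhds_of_tendsto_nhdsWithin Real.tendsto_arctan_atTop).comp
          (tendsto_id.atTop_div_const (by norm_num))
      exact (h1.add_const _).const_mul 2
    rw [add_halves] at h
    refine h.congr' ?_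
    filter_upwards [eventually_gt_atTop 0] with p hp
    rw [(scat_aux p hp).2]
end

section
/- Let B ⊂ ℝ³ be a bounded measurable set. Then the vector-valued function (x, y) ↦ (x − y)/‖x − y‖³ is (Bochner) integrable on B × B with respect to Lebesgue measure, and ∫_B ∫_B (x − y)/‖x − y‖³ dy dx = 0. (In particular, a body exerts no net gravitational force on itself: ∫_B ∇ψ(x) dx = 0 where ∇ψ(x) = Gρ∫_B (x−y)/‖x−y‖³ dy.) -/
open MeasureTheory

/-- A body exerts no net gravitational force on itself: for any bounded measurable
`B ⊂ ℝ³`, the vector field `(x,y) ↦ (x-y)/‖x-y‖³` is Bochner integrable on `B × B`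
and its integral vanishes. -/
theorem no_net_self_force (B : Set (EuclideanSpace ℝ (Fin 3)))
    (hBm : MeasurableSet B) (hBb : Bornology.IsBounded B) :
    IntegrableOn
      (fun p : EuclideanSpace ℝ (Fin 3) × EuclideanSpace ℝ (Fin 3) =>
        (‖p.1 - p.2‖ ^ 3)⁻¹ • (p.1 - p.2))
      (B ×ˢ B) ∧
    (∫ p in B ×ˢ B,
        (‖p.1 - p.2‖ ^ 3)⁻¹ • (p.1 - p.2)
          : EuclideanSpace ℝ (Fin 3))
      = 0 := by
  constructor
  · obtain ⟨r, hr⟩ := hBb.subset_ball 0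
    let K : EuclideanSpace ℝ (Fin 3) → EuclideanSpace ℝ (Fin 3) :=
      fun z => (‖z‖ ^ 3)⁻¹ • z
    have hK : IntegrableOn K (Metric.ball 0 (r + r)) := by
      refine integrableOn_ball_of_norm_le_rpow (C := 1) (α := 2) (by simp) (by simp; norm_num)
        (Filter.Eventually.of_forall fun z => ?_) ?_
      · simp only [K, norm_smul, norm_inv, norm_pow, norm_norm, one_mul]
        rcases eq_or_ne z 0 with rfl | hz
        · simp
        · have : 0 < ‖z‖ := norm_pos_iff.2 hz
          rw [Real.rpow_neg this.le]
          norm_cast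
          apply le_of_eq
          field_simp
      · exact (Measurable.aestronglyMeasurable (by fun_prop))
    have h1 : Integrable (B.indicator (fun _ => (1 : ℝ))) :=
      (integrable_indicator_iff hBm).2
        (integrableOn_const hBb.measure_lt_top.ne)
    have h2 := (integrable_indicator_iff Metric.isOpen_ball.measurableSet).2 hK
    have h3 := h1.convolution_integrand (ContinuousLinearMap.lsmul ℝ ℝ) h2
    refine (h3.integrableOn (s := B ×ˢ B)).congr_fun ?_ (hBm.prod hBm)
    rintro ⟨x, y⟩ ⟨hx, hy⟩
    have hx' := mem_ball_zero_iff.1 (hr hx)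
    have hy' := mem_ball_zero_iff.1 (hr hy)
    have : x - y ∈ Metric.ball (0 : EuclideanSpace ℝ (Fin 3)) (r + r) := by
      rw [mem_ball_zero_iff]
      linarith [norm_sub_le x y]
    simp only at hy
    simp [Set.indicator_of_mem hy, Set.indicator_of_mem this, K]
  · have h := setIntegral_prod_swap (μ := volume) (ν := volume) B B (fun p : EuclideanSpace ℝ (Fin 3) × EuclideanSpace ℝ (Fin 3) =>
        (‖p.1 - p.2‖ ^ 3)⁻¹ • (p.1 - p.2))
    have := IsAddTorsionFree.of_module_rat (EuclideanSpace ℝ (Fin 3))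
    rw [← self_eq_neg, ← integral_neg]
    refine h.symm.trans ?_
    congr 1
    ext1 p
    simp only [Prod.fst_swap, Prod.snd_swap]
    rw [norm_sub_rev, ← smul_neg, neg_sub]
end

section
/- Let R > 0 and let S_R := {x ∈ ℝ³ : ‖x‖ = R} carry the 2-dimensional Hausdorff measure μH². Fix e ∈ ℝ³ and let Ω(x) := e × x be the rotational vector field about e; for a function f that is continuously differentiable on a neighborhood of S_R, write (Ωf)(x) := (Df)(x)[e × x]. Then for all such f, g : ℝ³ → ℝ one has ∫_{S_R} f(x)·(Ωg)(x) dμH²(x) = −∫_{S_R} (Ωf)(x)·g(x) dμH²(x); that is, Ω is skew-adjoint (divergence free) on the round sphere. -/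
open MeasureTheory

theorem rfs_sphere_finite (R : ℝ) (hR : 0 < R) :
    (Measure.hausdorffMeasure 2 : Measure (EuclideanSpace ℝ (Fin 3)))
      (Metric.sphere (0 : EuclideanSpace ℝ (Fin 3)) R) < ⊤ := by
  let F : ℝ × ℝ → EuclideanSpace ℝ (Fin 3) := fun p =>
    (EuclideanSpace.equiv (Fin 3) ℝ).symm
      ![R * Real.cos p.2 * Real.cos p.1, R * Real.cos p.2 * Real.sin p.1, R * Real.sin p.2]
  let K : Set (ℝ × ℝ) := Set.Icc (-Real.pi) Real.pi ×ˢ Set.Icc (-Real.pi) Real.pi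
  have hK : IsCompact K := isCompact_Icc.prod isCompact_Icc
  have hKc : Convex ℝ K := (convex_Icc _ _).prod (convex_Icc _ _)
  have hF : ContDiff ℝ 1 F := by
    refine (EuclideanSpace.equiv (Fin 3) ℝ).symm.contDiff.comp ?_
    rw [contDiff_pi]
    intro i
    fin_cases i <;> simp <;> fun_prop
  obtain ⟨C, hC⟩ := hF.contDiffOn.exists_lipschitzOnWith (s := K) one_ne_zero hKc hK
  have h1 := hC.hausdorffMeasure_image_le (d := 2) (by norm_num)
  rw [hausdorffMeasure_prod_real] at h1
  have h2 : Metric.sphere (0 : EuclideanSpace ℝ (Fin 3)) R ⊆ F '' K := by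
    intro x hx
    have hx' : x 0 ^ 2 + x 1 ^ 2 + x 2 ^ 2 = R ^ 2 := by
      have : ‖x‖ = R := by simpa using hx
      rw [← this, EuclideanSpace.norm_sq_eq, Fin.sum_univ_three]
      simp
    let z : ℂ := ⟨x 0, x 1⟩
    have hz : ‖z‖ = √(x 0 ^ 2 + x 1 ^ 2) := by
      rw [Complex.norm_def, Complex.normSq_apply]
      simp only [z]
      congr 1; ring
    have hle : |x 2 / R| ≤ 1 := by
      rw [abs_div, abs_of_pos hR, div_le_one hR]
      exact abs_le_of_sq_le_sq (by nlinarith [sq_nonneg (x 0), sq_nonneg (x 1)]) hR.le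
    have hcos : R * Real.cos (Real.arcsin (x 2 / R)) = ‖z‖ := by
      rw [Real.cos_arcsin, hz]
      have : x 0 ^ 2 + x 1 ^ 2 = R ^ 2 * (1 - (x 2 / R) ^ 2) := by
        field_simp; linarith
      rw [this, Real.sqrt_mul (sq_nonneg R), Real.sqrt_sq hR.le]
    have hsin : R * Real.sin (Real.arcsin (x 2 / R)) = x 2 := by
      rw [Real.sin_arcsin (abs_le.1 hle).1 (abs_le.1 hle).2]
      field_simp
    refine ⟨(z.arg, Real.arcsin (x 2 / R)), ⟨⟨?_, ?_⟩, ⟨?_, ?_⟩⟩, ?_⟩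
    · exact (Complex.neg_pi_lt_arg z).le
    · exact Complex.arg_le_pi z
    · have := Real.neg_pi_div_two_le_arcsin (x 2 / R)
      have := Real.pi_pos
      simp only
      linarith
    · have := Real.arcsin_le_pi_div_two (x 2 / R)
      have := Real.pi_pos
      simp only
      linarith
    · ext i
      have e0 := Complex.norm_mul_cos_arg z
      have e1 := Complex.norm_mul_sin_arg z
      fin_cases i
      · simp [F, hcos]; rfl
      · simp [F, hcos]; rfl
      · simpa [F] using hsin
  refine (measure_mono h2).trans_lt (h1.trans_lt ?_)
  exact ENNReal.mul_lt_top (ENNReal.rpow_lt_top_of_nonneg (by norm_num) ENNReal.coe_ne_top)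
    hK.measure_lt_top

noncomputable def rfsA (e : EuclideanSpace ℝ (Fin 3)) :
    EuclideanSpace ℝ (Fin 3) →L[ℝ] EuclideanSpace ℝ (Fin 3) :=
  LinearMap.toContinuousLinearMap
    { toFun := cross3 e
      map_add' := by
        intro x y; ext i; fin_cases i <;> simp [cross3] <;> ring
      map_smul' := by
        intro c x; ext i; fin_cases i <;> simp [cross3] <;> ring }

theorem rfsA_apply (e x : EuclideanSpace ℝ (Fin 3)) : rfsA e x = cross3 e x := rfl

theorem rfsA_skew (e : EuclideanSpace ℝ (Fin 3)) : rfsA e ∈ skewAdjoint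
    (EuclideanSpace ℝ (Fin 3) →L[ℝ] EuclideanSpace ℝ (Fin 3)) := by
  rw [skewAdjoint.mem_iff, ContinuousLinearMap.star_eq_adjoint, eq_comm,
    ContinuousLinearMap.eq_adjoint_iff]
  intro x y
  simp [PiLp.inner_apply, Fin.sum_univ_three, rfsA_apply, cross3]
  ring

noncomputable def rfsU (e : EuclideanSpace ℝ (Fin 3)) (t : ℝ) :
    EuclideanSpace ℝ (Fin 3) ≃ₗᵢ[ℝ] EuclideanSpace ℝ (Fin 3) :=
  letI : NormedAlgebra ℚ (EuclideanSpace ℝ (Fin 3) →L[ℝ] EuclideanSpace ℝ (Fin 3)) :=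
    NormedAlgebra.restrictScalars ℚ ℝ _
  Unitary.linearIsometryEquiv ⟨NormedSpace.exp (t • rfsA e),
    NormedSpace.exp_mem_unitary_of_mem_skewAdjoint (skewAdjoint.smul_mem t (rfsA_skew e))⟩

theorem rfsU_apply (e : EuclideanSpace ℝ (Fin 3)) (t : ℝ) (x : EuclideanSpace ℝ (Fin 3)) :
    rfsU e t x = NormedSpace.exp (t • rfsA e) x := rfl

theorem rfsU_zero (e x : EuclideanSpace ℝ (Fin 3)) : rfsU e 0 x = x := by
  have h0 : (0 : ℝ) • rfsA e = 0 := zero_smul ℝ (rfsA e)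
  rw [rfsU_apply, h0, NormedSpace.exp_zero]; rfl

theorem rfsU_deriv (e x : EuclideanSpace ℝ (Fin 3)) (t : ℝ) :
    HasDerivAt (fun s => rfsU e s x) (cross3 e (rfsU e t x)) t := by
  have h := (hasDerivAt_exp_smul_const' (𝕂 := ℝ) (rfsA e) t).clm_apply (hasDerivAt_const t x)
  simpa [rfsU_apply, ← rfsA_apply] using h

theorem rfs_main (R : ℝ) (hR : 0 < R) (e : EuclideanSpace ℝ (Fin 3))
    (h : EuclideanSpace ℝ (Fin 3) → ℝ)
    (U : Set (EuclideanSpace ℝ (Fin 3))) (hU : IsOpen U)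
    (hsub : Metric.sphere (0 : EuclideanSpace ℝ (Fin 3)) R ⊆ U)
    (hh : ContDiffOn ℝ 1 h U)
    (hc : ContinuousOn (fun x => fderiv ℝ h x (cross3 e x))
      (Metric.sphere (0 : EuclideanSpace ℝ (Fin 3)) R)) :
    ∫ x in Metric.sphere (0 : EuclideanSpace ℝ (Fin 3)) R, fderiv ℝ h x (cross3 e x)
        ∂(Measure.hausdorffMeasure 2) = 0 := by
  set S := Metric.sphere (0 : EuclideanSpace ℝ (Fin 3)) R with hS
  have hSm : MeasurableSet S := Metric.isClosed_sphere.measurableSet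
  have hSc : IsCompact S := isCompact_sphere _ _
  have hmem : ∀ t x, x ∈ S → rfsU e t x ∈ S := by
    intro t x hx
    simpa [hS] using hx
  have hpre : ∀ t, rfsU e t ⁻¹' S = S := by
    intro t; ext x; simp [hS]
  have : IsFiniteMeasure ((Measure.hausdorffMeasure 2 :
      Measure (EuclideanSpace ℝ (Fin 3))).restrict S) :=
    ⟨by simpa using rfs_sphere_finite R hR⟩
  have hint : ∀ k : EuclideanSpace ℝ (Fin 3) → ℝ, ContinuousOn k S →
      IntegrableOn k S (Measure.hausdorffMeasure 2) := by
    intro k hk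
    have := hk.integrableOn_compact' (μ := (Measure.hausdorffMeasure 2 :
      Measure (EuclideanSpace ℝ (Fin 3))).restrict S) hSc hSm
    simpa [IntegrableOn, Measure.restrict_restrict hSm] using this
  have hhc : ContinuousOn h S := hh.continuousOn.mono hsub
  obtain ⟨C, hC⟩ := hSc.exists_bound_of_continuousOn hc
  have hcomp : ∀ t, ContinuousOn (fun x => h (rfsU e t x)) S := fun t =>
    hhc.comp (rfsU e t).continuous.continuousOn (hmem t)
  have key := hasDerivAt_integral_of_dominated_loc_of_deriv_le
    (μ := (Measure.hausdorffMeasure 2 : Measure (EuclideanSpace ℝ (Fin 3))).restrict S)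
    (F := fun t x => h (rfsU e t x)) (x₀ := (0 : ℝ)) (s := Set.univ) (bound := fun _ => C)
    (F' := fun t x => fderiv ℝ h (rfsU e t x) (cross3 e (rfsU e t x)))
    Filter.univ_mem
    (Filter.Eventually.of_forall fun t => (hint _ (hcomp t)).aestronglyMeasurable)
    (hint _ (hcomp 0))
    (by simpa only [rfsU_zero] using (hint _ hc).aestronglyMeasurable)
    (by
      filter_upwards [ae_restrict_mem hSm] with x hx t _
      exact hC _ (hmem t x hx))
    (integrable_const C)
    (by
      filter_upwards [ae_restrict_mem hSm] with x hx t _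
      have hd : DifferentiableAt ℝ h (rfsU e t x) :=
        (hh.contDiffAt (hU.mem_nhds (hsub (hmem t x hx)))).differentiableAt one_ne_zero
      exact hd.hasFDerivAt.comp_hasDerivAt t (rfsU_deriv e x t))
  have h2 := key.2
  simp only [rfsU_zero] at h2
  have hconst : ∀ t, ∫ x in S, h (rfsU e t x) ∂(Measure.hausdorffMeasure 2)
      = ∫ x in S, h x ∂(Measure.hausdorffMeasure 2) := by
    intro t
    have := ((rfsU e t).toIsometryEquiv.measurePreserving_hausdorffMeasure
      2).setIntegral_preimage_emb
        (rfsU e t).toHomeomorph.measurableEmbedding h S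
    have hp : (rfsU e t).toIsometryEquiv ⁻¹' S = S := hpre t
    rw [hp] at this
    exact this
  simp only [hconst] at h2
  exact h2.unique (hasDerivAt_const _ _)

theorem rfs_cross_cont (e : EuclideanSpace ℝ (Fin 3)) : Continuous (cross3 e) :=
  (rfsA e).continuous

/-- The rotational vector field `Ω(x) = e × x` is skew-adjoint (divergence free) on the
round sphere `S_R`: for `f`, `g` continuously differentiable on a neighborhood of `S_R`,
`∫_{S_R} f · (Ωg) dμH² = -∫_{S_R} (Ωf) · g dμH²`, with `(Ωf)(x) = Df(x)[e × x]`. -/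
theorem rotation_field_skew_adjoint_on_sphere
    (R : ℝ) (hR : 0 < R) (e : EuclideanSpace ℝ (Fin 3))
    (f g : EuclideanSpace ℝ (Fin 3) → ℝ)
    (U : Set (EuclideanSpace ℝ (Fin 3))) (hU : IsOpen U)
    (hsub : Metric.sphere (0 : EuclideanSpace ℝ (Fin 3)) R ⊆ U)
    (hf : ContDiffOn ℝ 1 f U) (hg : ContDiffOn ℝ 1 g U) :
    ∫ x in Metric.sphere (0 : EuclideanSpace ℝ (Fin 3)) R,
        f x * fderiv ℝ g x (cross3 e x)
        ∂(MeasureTheory.Measure.hausdorffMeasure 2)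
      = - ∫ x in Metric.sphere (0 : EuclideanSpace ℝ (Fin 3)) R,
          (fderiv ℝ f x (cross3 e x)) * g x
          ∂(MeasureTheory.Measure.hausdorffMeasure 2) := by
  set S := Metric.sphere (0 : EuclideanSpace ℝ (Fin 3)) R with hS
  have hSm : MeasurableSet S := Metric.isClosed_sphere.measurableSet
  have hSc : IsCompact S := isCompact_sphere _ _
  have : IsFiniteMeasure ((Measure.hausdorffMeasure 2 :
      Measure (EuclideanSpace ℝ (Fin 3))).restrict S) :=
    ⟨by simpa using rfs_sphere_finite R hR⟩
  have hint : ∀ k : EuclideanSpace ℝ (Fin 3) → ℝ, ContinuousOn k S →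
      IntegrableOn k S (Measure.hausdorffMeasure 2) := by
    intro k hk
    have := hk.integrableOn_compact' (μ := (Measure.hausdorffMeasure 2 :
      Measure (EuclideanSpace ℝ (Fin 3))).restrict S) hSc hSm
    simpa [IntegrableOn, Measure.restrict_restrict hSm] using this
  have hdc : ∀ k : EuclideanSpace ℝ (Fin 3) → ℝ, ContDiffOn ℝ 1 k U →
      ContinuousOn (fun x => fderiv ℝ k x (cross3 e x)) S := fun k hk =>
    ((hk.continuousOn_fderiv_of_isOpen hU le_rfl).mono hsub).clm_apply
      (rfs_cross_cont e).continuousOn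
  have hfg := hf.mul hg
  have hm := rfs_main R hR e (fun x => f x * g x) U hU hsub hfg (hdc _ hfg)
  have hd : ∀ k : EuclideanSpace ℝ (Fin 3) → ℝ, ContDiffOn ℝ 1 k U → ∀ x ∈ S,
      DifferentiableAt ℝ k x := fun k hk x hx =>
    (hk.contDiffAt (hU.mem_nhds (hsub hx))).differentiableAt one_ne_zero
  have heq : ∫ x in S, fderiv ℝ (fun x => f x * g x) x (cross3 e x)
        ∂(Measure.hausdorffMeasure 2)
      = ∫ x in S, (f x * fderiv ℝ g x (cross3 e x) + fderiv ℝ f x (cross3 e x) * g x)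
        ∂(Measure.hausdorffMeasure 2) := by
    refine setIntegral_congr_fun hSm fun x hx => ?_
    rw [fderiv_fun_mul (hd f hf x hx) (hd g hg x hx)]
    simp [mul_comm]
  have i1 : IntegrableOn (fun x => f x * fderiv ℝ g x (cross3 e x)) S
      (Measure.hausdorffMeasure 2) := hint _ ((hf.continuousOn.mono hsub).mul (hdc g hg))
  have i2 : IntegrableOn (fun x => fderiv ℝ f x (cross3 e x) * g x) S
      (Measure.hausdorffMeasure 2) := hint _ ((hdc f hf).mul (hg.continuousOn.mono hsub))
  rw [heq, integral_add i1 i2] at hm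
  linarith
end
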